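/- The 45-letter relation word cabbcbbcbacabacbcbbcabbcabcbbcbbacbacbcbbcabb of Thompson's group V acts as the identity on C: applying, in order (left to right), the maps c, a, b, b, c, b, b, c, b, a, c, a, b, a, c, b, c, b, b, c, a, b, b, c, a, b, c, b, b, c, b, b, a, c, b, a, c, b, c, b, b, c, a, b, b to any infinite binary sequence x returns x. -/

import Mathlib

/-- Cantor space of infinite binary sequences, `false` representing 0 and `true` representing 1. -/
abbrev Cantor : Type := ℕ → Bool

/-- Generator `a` of Thompson's V: 00x ↦ 01x, 01x ↦ 00x, 1x ↦ 1x. -/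
def genA (x : Cantor) : Cantor :=
  if x 0 = false then (fun n => if n = 1 then !x 1 else x n) else x

/-- Generator `b` of Thompson's V: 01x ↦ 10x, 10x ↦ 11x, 11x ↦ 01x, 00x ↦ 00x. -/
def genB (x : Cantor) : Cantor := fun n =>
  if n = 0 then
    match x 0, x 1 with
    | false, false => false
    | false, true  => true
    | true,  false => true
    | true,  true  => false
  else if n = 1 then
    match x 0, x 1 with
    | false, false => false
    | false, true  => false
    | true,  false => true
    | true,  true  => true
  else x n

/-- Generator `c` of Thompson's V: 00x ↦ 1x, 1x ↦ 00x, 01x ↦ 01x. -/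
def genC (x : Cantor) : Cantor :=
  if x 0 = true then (fun n => if n ≤ 1 then false else x (n - 1))
  else if x 1 = false then (fun n => if n = 0 then true else x (n + 1))
  else x

/-- Apply a word of maps left to right (leftmost letter first). -/
def applyWord (l : List (Cantor → Cantor)) (x : Cantor) : Cantor :=
  l.foldl (fun y f => f y) x

/-- Prepend a bit to a sequence. -/
def consBit (b : Bool) (x : Cantor) : Cantor := fun n =>
  match n with
  | 0 => b
  | n + 1 => x n

theorem consBit_eta (x : Cantor) : x = consBit (x 0) (fun n => x (n + 1)) := by
  funext n; cases n <;> rfl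

theorem genA_false (b : Bool) (x : Cantor) :
    genA (consBit false (consBit b x)) = consBit false (consBit (!b) x) := by
  funext n
  rcases n with _ | _ | n <;> simp [genA, consBit]

theorem genA_true (x : Cantor) : genA (consBit true x) = consBit true x := by
  simp [genA, consBit]

theorem genB_ff (x : Cantor) :
    genB (consBit false (consBit false x)) = consBit false (consBit false x) := by
  funext n
  rcases n with _ | _ | n <;> simp [genB, consBit]

theorem genB_ft (x : Cantor) :
    genB (consBit false (consBit true x)) = consBit true (consBit false x) := by
  funext n
  rcases n with _ | _ | n <;> simp [genB, consBit]

theorem genB_tf (x : Cantor) :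
    genB (consBit true (consBit false x)) = consBit true (consBit true x) := by
  funext n
  rcases n with _ | _ | n <;> simp [genB, consBit]

theorem genB_tt (x : Cantor) :
    genB (consBit true (consBit true x)) = consBit false (consBit true x) := by
  funext n
  rcases n with _ | _ | n <;> simp [genB, consBit]

theorem genC_t (x : Cantor) :
    genC (consBit true x) = consBit false (consBit false x) := by
  funext n
  rcases n with _ | _ | n <;> simp [genC, consBit]

theorem genC_ff (x : Cantor) :
    genC (consBit false (consBit false x)) = consBit true x := by
  funext n
  rcases n with _ | n <;> simp [genC, consBit]

theorem genC_ft (x : Cantor) :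
    genC (consBit false (consBit true x)) = consBit false (consBit true x) := by
  simp [genC, consBit]

theorem exists_consBit (x : Cantor) : ∃ b y, x = consBit b y := ⟨_, _, consBit_eta x⟩

/-- The 45-letter relation cabbcbbcbacabacbcbbcabbcabcbbcbbacbacbcbbcabb acts as the identity. -/
theorem relation_cabbcbbcbacabacbcbbcabbcabcbbcbbacbacbcbbcabb : ∀ x : Cantor,
    applyWord [genC, genA, genB, genB, genC, genB, genB, genC, genB, genA,
               genC, genA, genB, genA, genC, genB, genC, genB, genB, genC,
               genA, genB, genB, genC, genA, genB, genC, genB, genB, genC,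
               genB, genB, genA, genC, genB, genA, genC, genB, genC, genB,
               genB, genC, genA, genB, genB] x = x := by
  intro x
  obtain ⟨b0, x, rfl⟩ := exists_consBit x
  obtain ⟨b1, x, rfl⟩ := exists_consBit x
  obtain ⟨b2, x, rfl⟩ := exists_consBit x
  cases b0 <;> cases b1 <;> cases b2 <;>
    simp only [applyWord, List.foldl_cons, List.foldl_nil, genA_false, genA_true, genB_ff,
      genB_ft, genB_tf, genB_tt, genC_t, genC_ff, genC_ft, Bool.not_true, Bool.not_false]
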